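/- arXiv:2310.01687 — 12 statements merged into one kernel-verified Lean document; each statement's English description precedes it below -/
import Mathlib

section
/- Let a > 0. For every z with -a ≤ z ≤ 2 one has -a ≤ f_a(z) ≤ max{ f_a((1-2a)/3), 2 }. Moreover f_a((1-2a)/3) ≤ 2 if and only if a ≤ 2. -/
/-!
Write `c = (1 - 2a)/3`. The critical points of `f_a` are `1` and `c`, which yields the factorizations
`f_a(z) + a = (z - 1)² (z + a)`, `f_a(z) - f_a(c) = (z - c)² (z - (a + 4)/3)` and
`f_a(z) - 2 = (z - 2) (z² + a z + 1)`.
The first gives the lower bound on `[-a, 2]`. For the upper bound, the second gives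
`f_a(z) ≤ f_a(c)` when `z ≤ (a + 4)/3`; otherwise `z > 0`, and the third gives `f_a(z) ≤ 2`.
Finally `27 (f_a(c) - 2) = (a - 2) (2a + 5)²`, which has the sign of `a - 2`.
-/

/-- The cubic map `f_a(z) = z * g_a(z)` with `g_a(z) = z^2 + (a-2)z + 1 - 2a`. -/
noncomputable def fa (a z : ℝ) : ℝ := z * (z ^ 2 + (a - 2) * z + 1 - 2 * a)

/-- For `a > 0`: every `z ∈ [-a, 2]` satisfies `-a ≤ f_a(z) ≤ max (f_a((1-2a)/3)) 2`,
and `f_a((1-2a)/3) ≤ 2 ↔ a ≤ 2`. -/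
theorem cubic_range_bounds (a : ℝ) (ha : 0 < a) :
    (∀ z ∈ Set.Icc (-a) (2 : ℝ),
      -a ≤ fa a z ∧ fa a z ≤ max (fa a ((1 - 2 * a) / 3)) 2) ∧
    (fa a ((1 - 2 * a) / 3) ≤ 2 ↔ a ≤ 2) := by
  constructor
  · rintro z ⟨hz, hz2⟩
    constructor
    · have h : fa a z + a = (z - 1) ^ 2 * (z + a) := by unfold fa; ring
      have h0 : 0 ≤ (z - 1) ^ 2 * (z + a) := mul_nonneg (sq_nonneg _) (by linarith)
      linarith
    · rcases le_total z ((a + 4) / 3) with hd | hd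
      · apply le_max_of_le_left
        have h : fa a z - fa a ((1 - 2 * a) / 3)
            = (z - (1 - 2 * a) / 3) ^ 2 * (z - (a + 4) / 3) := by unfold fa; ring
        have h0 : (z - (1 - 2 * a) / 3) ^ 2 * (z - (a + 4) / 3) ≤ 0 :=
          mul_nonpos_of_nonneg_of_nonpos (sq_nonneg _) (by linarith)
        linarith
      · apply le_max_of_le_right
        have hz0 : 0 < z := by linarith
        have h : fa a z - 2 = (z - 2) * (z ^ 2 + a * z + 1) := by unfold fa; ring
        have h0 : (z - 2) * (z ^ 2 + a * z + 1) ≤ 0 :=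
          mul_nonpos_of_nonpos_of_nonneg (by linarith) (by positivity)
        linarith
  · have h : 27 * (fa a ((1 - 2 * a) / 3) - 2) = (a - 2) * (2 * a + 5) ^ 2 := by
      unfold fa; ring
    have hp : 0 < (2 * a + 5) ^ 2 := by positivity
    constructor
    · intro hf
      by_contra! ha2
      have := mul_pos (sub_pos.mpr ha2) hp
      linarith
    · intro ha2
      have := mul_nonpos_of_nonpos_of_nonneg (sub_nonpos.mpr ha2) hp.le
      linarith
end

section
/- Let 2√2 - 2 < a ≤ 1. Then the image of I_1 under f_a equals I_1 ∪ I_2, the image of I_4 under f_a equals I_1 ∪ I_2, and the image of I_5 under f_a equals I_3 ∪ I_4 ∪ I_5. -/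
/-!
Put `r± = (2 - a ± √(a² + 4a)) / 2`, the two roots of `g_a`. Three factorizations carry the proof:

* `f_a(z) = z (z - r₋) (z - r₊)`, giving the sign of `f_a` on each interval;
* `f_a(z) + a = (z + a) (z - 1)²`, so `f_a ≥ -a` on `[-a, ∞)`, with equality at `-a` and `1`;
* `f_a(z) - 2 = (z - 2) (z (z + a) + 1)`, so `f_a ≤ 2` on `[0, 2]`, with equality at `2`.

Since `a > 1/2`, one has `-a ≤ r₋ ≤ 0` and `1 ≤ r₊ ≤ 2`. Hence `f_a` maps `I₁` and `I₄` into
`[-a, 0] = I₁ ∪ I₂` and `I₅` into `[0, 2] = I₃ ∪ I₄ ∪ I₅`. The extreme values are attained (on `I₄`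
the minimum is at the interior critical point `1`), so the intermediate value theorem gives
equality.
-/

open Real

lemma fa_add_eq (a z : ℝ) : fa a z + a = (z + a) * (z - 1) ^ 2 := by unfold fa; ring

lemma fa_sub_two_eq (a z : ℝ) : fa a z - 2 = (z - 2) * (z * (z + a) + 1) := by unfold fa; ring

lemma fa_eq_mul_roots {a s : ℝ} (hs : s ^ 2 = a ^ 2 + 4 * a) (z : ℝ) :
    fa a z = z * ((z - (2 - a - s) / 2) * (z - (2 - a + s) / 2)) := by
  unfold fa
  linear_combination (z / 4) * hs

lemma continuous_fa (a : ℝ) : Continuous (fa a) := by unfold fa; fun_prop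

/-- A continuous map sending `[p, q]` into `[c, d]` and attaining `c` at `u` and `d` at `v`, with
`u ≤ v` in `[p, q]`, maps `[p, q]` onto `[c, d]`. -/
lemma image_Icc_eq_of_attains {f : ℝ → ℝ} (hf : Continuous f) {p q c d u v : ℝ}
    (hpu : p ≤ u) (huv : u ≤ v) (hvq : v ≤ q) (hu : f u = c) (hv : f v = d)
    (h : ∀ z, p ≤ z → z ≤ q → c ≤ f z ∧ f z ≤ d) :
    f '' Set.Icc p q = Set.Icc c d := by
  apply Set.Subset.antisymm
  · rintro _ ⟨z, ⟨h1, h2⟩, rfl⟩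
    exact h z h1 h2
  · rw [← hu, ← hv]
    exact (intermediate_value_Icc huv hf.continuousOn).trans
      (Set.image_mono (Set.Icc_subset_Icc hpu hvq))

/-- For `2√2 - 2 < a ≤ 1`, with the subintervals
`I₁ = [-a, (2-a-√(a²+4a))/2]`, `I₂ = [(2-a-√(a²+4a))/2, 0]`, `I₃ = [0, 1/4]`,
`I₄ = [1/4, (2-a+√(a²+4a))/2]`, `I₅ = [(2-a+√(a²+4a))/2, 2]`, one has
`f_a(I₁) = I₁ ∪ I₂`, `f_a(I₄) = I₁ ∪ I₂`, and `f_a(I₅) = I₃ ∪ I₄ ∪ I₅`. -/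
theorem cubic_interval_images (a : ℝ)
    (ha₁ : 2 * Real.sqrt 2 - 2 < a) (ha₂ : a ≤ 1)
    (I₁ I₂ I₃ I₄ I₅ : Set ℝ)
    (hI₁ : I₁ = Set.Icc (-a) ((2 - a - Real.sqrt (a ^ 2 + 4 * a)) / 2))
    (hI₂ : I₂ = Set.Icc ((2 - a - Real.sqrt (a ^ 2 + 4 * a)) / 2) 0)
    (hI₃ : I₃ = Set.Icc (0 : ℝ) (1 / 4))
    (hI₄ : I₄ = Set.Icc (1 / 4 : ℝ) ((2 - a + Real.sqrt (a ^ 2 + 4 * a)) / 2))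
    (hI₅ : I₅ = Set.Icc ((2 - a + Real.sqrt (a ^ 2 + 4 * a)) / 2) 2) :
    fa a '' I₁ = I₁ ∪ I₂ ∧ fa a '' I₄ = I₁ ∪ I₂ ∧ fa a '' I₅ = I₃ ∪ I₄ ∪ I₅ := by
  have ha : 1 / 2 < a := by
    have : (5 / 4 : ℝ) ≤ Real.sqrt 2 := Real.le_sqrt_of_sq_le (by norm_num)
    linarith
  have hs : Real.sqrt (a ^ 2 + 4 * a) ^ 2 = a ^ 2 + 4 * a := Real.sq_sqrt (by positivity)
  have hs0 := Real.sqrt_nonneg (a ^ 2 + 4 * a)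
  generalize Real.sqrt (a ^ 2 + 4 * a) = s at *
  have hs_gt : 2 - a < s := by nlinarith
  have hs_ge : a ≤ s := by nlinarith
  have hs_le : s ≤ a + 2 := by nlinarith
  have hfac := fa_eq_mul_roots hs
  have hr₁ : fa a ((2 - a - s) / 2) = 0 := by rw [hfac]; ring
  have hr₂ : fa a ((2 - a + s) / 2) = 0 := by rw [hfac]; ring
  have hneg : fa a (-a) = -a := by unfold fa; ring
  have hone : fa a 1 = -a := by unfold fa; ring
  have htwo : fa a 2 = 2 := by unfold fa; ring
  have hlow : ∀ z, -a ≤ z → -a ≤ fa a z := fun z hz => by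
    have : 0 ≤ (z + a) * (z - 1) ^ 2 := mul_nonneg (by linarith) (sq_nonneg _)
    linarith [fa_add_eq a z]
  subst hI₁ hI₂ hI₃ hI₄ hI₅
  rw [Set.Icc_union_Icc_eq_Icc (by linarith) (by linarith),
    Set.Icc_union_Icc_eq_Icc (by norm_num) (by linarith),
    Set.Icc_union_Icc_eq_Icc (by linarith) (by linarith)]
  refine ⟨?_, ?_, ?_⟩
  · refine image_Icc_eq_of_attains (continuous_fa a) le_rfl (by linarith) le_rfl hneg hr₁
      fun z h1 h2 => ⟨hlow z h1, ?_⟩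
    rw [hfac]
    exact mul_nonpos_of_nonpos_of_nonneg (by linarith)
      (mul_nonneg_of_nonpos_of_nonpos (by linarith) (by linarith))
  · refine image_Icc_eq_of_attains (continuous_fa a) (u := 1) (by norm_num) (by linarith) le_rfl
      hone hr₂ fun z h1 h2 => ⟨hlow z (by linarith), ?_⟩
    rw [hfac]
    exact mul_nonpos_of_nonneg_of_nonpos (by linarith)
      (mul_nonpos_of_nonneg_of_nonpos (by linarith) (by linarith))
  · refine image_Icc_eq_of_attains (continuous_fa a) le_rfl (by linarith) le_rfl hr₂ htwo
      fun z h1 h2 => ⟨?_, ?_⟩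
    · rw [hfac]
      exact mul_nonneg (by linarith) (mul_nonneg (by linarith) (by linarith))
    · have hz : 0 ≤ z * (z + a) := mul_nonneg (by linarith) (by linarith)
      have : (z - 2) * (z * (z + a) + 1) ≤ 0 :=
        mul_nonpos_of_nonpos_of_nonneg (by linarith) (by linarith)
      linarith [fa_sub_two_eq a z]
end

section
/- Let 2√2 - 2 < a ≤ 1. Then f_a maps the interval I_2 into the interval I_3, and f_a maps the interval I_3 into the interval I_2; that is, f_a(I_2) ⊆ I_3 and f_a(I_3) ⊆ I_2. -/
/-!
The left endpoint `c` of `I₂` is the smaller root of `g_a`, so `g_a ≤ 0` on `I₂`, and by convexity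
`g_a ≤ 0` on `I₃` as well; this gives the signs of `f_a`. Since `∂f_a(z)/∂a = z(z - 2)`, the size
bounds reduce to `a = 1`. On `I₂` the derivative in `a` is nonnegative, so
`f_a(z) ≤ f_1(z) = 5/27 + (z + 1/3)²(z - 5/3) ≤ 5/27 < 1/4`. On `I₃` it is nonpositive, so
`f_a(z) ≥ f_1(z) = z³ - z² - z ≥ -5/16`, while `c ≤ -9/25` as soon as `a ≥ 41/50`.
-/

open Real

/-- For `2√2 - 2 < a ≤ 1`, with `I₂ = [(2-a-√(a²+4a))/2, 0]` and `I₃ = [0, 1/4]`,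
one has `f_a(I₂) ⊆ I₃` and `f_a(I₃) ⊆ I₂`. -/
theorem cubic_interval_swap (a : ℝ)
    (ha₁ : 2 * Real.sqrt 2 - 2 < a) (ha₂ : a ≤ 1)
    (I₂ I₃ : Set ℝ)
    (hI₂ : I₂ = Set.Icc ((2 - a - Real.sqrt (a ^ 2 + 4 * a)) / 2) 0)
    (hI₃ : I₃ = Set.Icc (0 : ℝ) (1 / 4)) :
    fa a '' I₂ ⊆ I₃ ∧ fa a '' I₃ ⊆ I₂ := by
  subst hI₂ hI₃
  -- Only the rational consequence `a > 41/50` of the lower bound on `a` is needed.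
  have h2 : (141 / 100 : ℝ) ≤ √2 := Real.le_sqrt_of_sq_le (by norm_num)
  have ha : 41 / 50 < a := by linarith
  have hs : (19 / 10 : ℝ) ≤ √(a ^ 2 + 4 * a) := Real.le_sqrt_of_sq_le (by nlinarith)
  have hsq : √(a ^ 2 + 4 * a) ^ 2 = a ^ 2 + 4 * a := Real.sq_sqrt (by nlinarith)
  set s := √(a ^ 2 + 4 * a)
  constructor
  · rintro _ ⟨z, ⟨hz1, hz0⟩, rfl⟩
    have hg : z ^ 2 + (a - 2) * z + 1 - 2 * a ≤ 0 := by
      have h : (z - (2 - a - s) / 2) * (z - (2 - a + s) / 2) ≤ 0 :=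
        mul_nonpos_of_nonneg_of_nonpos (by linarith) (by linarith)
      linarith
    refine ⟨mul_nonneg_of_nonpos_of_nonpos hz0 hg, ?_⟩
    have h1 : 0 ≤ (1 - a) * (z * (z - 2)) :=
      mul_nonneg (by linarith) (mul_nonneg_of_nonpos_of_nonpos hz0 (by linarith))
    have h3 : (z + 1 / 3) ^ 2 * (z - 5 / 3) ≤ 0 :=
      mul_nonpos_of_nonneg_of_nonpos (sq_nonneg _) (by linarith)
    unfold fa
    linarith
  · rintro _ ⟨z, ⟨hz0, hz1⟩, rfl⟩
    have hg : z ^ 2 + (a - 2) * z + 1 - 2 * a ≤ 0 := by nlinarith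
    refine ⟨?_, mul_nonpos_of_nonneg_of_nonpos hz0 hg⟩
    have h1 : 0 ≤ (1 - a) * (z * (2 - z)) :=
      mul_nonneg (by linarith) (mul_nonneg hz0 (by linarith))
    have h3 : 0 ≤ z ^ 3 := pow_nonneg hz0 3
    have h4 : z ^ 2 ≤ 1 / 16 := by nlinarith
    unfold fa
    linarith
end

section
/- Let f be a real polynomial of degree at least 2 such that all roots of its derivative f' are real and distinct (i.e., f' has deg(f) - 1 distinct real roots). Then for every real x with f'(x) ≠ 0, the Schwarzian derivative satisfies Sf(x) = f'''(x)/f'(x) - (3/2)(f''(x)/f'(x))^2 < 0. -/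
/-!
With `q = p'`, the Schwarzian derivative is
`(q q'' - q'²) / q² - (1/2) (q' / q)²`, and the first term is the derivative of the logarithmic
derivative `q' / q = ∑ 1 / (x - a)`, i.e. `-∑ 1 / (x - a)²`, the sum being over the roots `a`
of `q`. It is negative since `q` splits over `ℝ` and has at least one root. To avoid divisions,
the inequality `q q'' - q'² ≤ 0` is proved by induction on the roots: if `q = (X - a) r`, then
`q q'' - q'² = (x - a)² (r r'' - r'²) - r²`; the last term gives strictness.
-/

open Polynomial

lemma laguerre_X_sub_C_mul (r : Polynomial ℝ) (a x : ℝ) :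
    eval x ((X - C a) * r) * eval x (derivative (derivative ((X - C a) * r))) -
        eval x (derivative ((X - C a) * r)) ^ 2 =
      (x - a) ^ 2 * (eval x r * eval x (derivative (derivative r)) -
        eval x (derivative r) ^ 2) - eval x r ^ 2 := by
  simp only [derivative_mul, derivative_add, derivative_sub, derivative_X, derivative_C,
    derivative_one, derivative_zero, eval_add, eval_sub, eval_mul, eval_X, eval_C, eval_one, eval_zero]
  ring

/-- Laguerre's inequality for a product of real linear factors. -/
lemma laguerre_nonpos (s : Multiset ℝ) (x : ℝ) :
    eval x (s.map fun a => X - C a).prod *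
        eval x (derivative (derivative (s.map fun a => X - C a).prod)) -
      eval x (derivative (s.map fun a => X - C a).prod) ^ 2 ≤ 0 := by
  induction s using Multiset.induction_on with
  | empty => simp
  | cons a s ih =>
    rw [Multiset.map_cons, Multiset.prod_cons, laguerre_X_sub_C_mul]
    nlinarith [mul_nonneg (sq_nonneg (x - a)) (neg_nonneg.mpr ih),
      sq_nonneg (eval x (s.map fun a => X - C a).prod)]

/-- Strict Laguerre inequality for a nonconstant real polynomial with only real roots, away from
these roots. -/
lemma laguerre_neg (q : Polynomial ℝ) (hq : Multiset.card q.roots = q.natDegree)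
    (hd : 0 < q.natDegree) (x : ℝ) (hx : eval x q ≠ 0) :
    eval x q * eval x (derivative (derivative q)) - eval x (derivative q) ^ 2 < 0 := by
  have hprod := C_leadingCoeff_mul_prod_multiset_X_sub_C hq
  obtain ⟨a, ha⟩ := Multiset.card_pos_iff_exists_mem.mp (hq ▸ hd)
  obtain ⟨s, hs⟩ := Multiset.exists_cons_of_mem ha
  rw [hs, Multiset.map_cons, Multiset.prod_cons] at hprod
  have h1 := laguerre_X_sub_C_mul (s.map fun a => X - C a).prod a x
  have h2 := laguerre_nonpos s x
  generalize (s.map fun a => X - C a).prod = r at *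
  generalize q.leadingCoeff = c at *
  subst hprod
  have hc : c ≠ 0 := fun h => hx (by simp [h])
  have hr : eval x r ≠ 0 := fun h => hx (by simp [h])
  have hneg : (x - a) ^ 2 * (eval x r * eval x (derivative (derivative r)) -
      eval x (derivative r) ^ 2) - eval x r ^ 2 < 0 := by
    nlinarith [mul_nonneg (sq_nonneg (x - a)) (neg_nonneg.mpr h2), sq_pos_of_ne_zero hr]
  rw [← h1] at hneg
  simp only [derivative_C_mul, eval_C_mul]
  nlinarith [mul_pos (sq_pos_of_ne_zero hc) (neg_pos.mpr hneg)]

/-- If `p` is a real polynomial of degree at least 2 whose derivative has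
`deg p - 1` distinct real roots (i.e. all roots of `p'` are real and distinct),
then the Schwarzian derivative `p'''/p' - (3/2)(p''/p')²` is negative at every
point where `p' ≠ 0`. -/
theorem polynomial_schwarzian_neg (p : Polynomial ℝ)
    (hdeg : 2 ≤ p.natDegree)
    (hcard : Multiset.card p.derivative.roots = p.natDegree - 1)
    (hdistinct : p.derivative.roots.Nodup) :
    ∀ x : ℝ, eval x p.derivative ≠ 0 →
      eval x (derivative (derivative (derivative p))) / eval x (derivative p) -
        (3 / 2) * (eval x (derivative (derivative p)) / eval x (derivative p)) ^ 2 < 0 := by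
  intro x hx
  have hle := natDegree_derivative_le p
  have hge := card_roots' (derivative p)
  have key := laguerre_neg (derivative p) (by omega) (by omega) x hx
  have heq : eval x (derivative (derivative (derivative p))) / eval x (derivative p) -
        (3 / 2) * (eval x (derivative (derivative p)) / eval x (derivative p)) ^ 2 =
      (eval x (derivative p) * eval x (derivative (derivative (derivative p))) -
        eval x (derivative (derivative p)) ^ 2 -
        (1 / 2) * eval x (derivative (derivative p)) ^ 2) / eval x (derivative p) ^ 2 := by
    field_simp
    ring
  rw [heq]
  apply div_neg_of_neg_of_pos _ (by positivity)
  nlinarith [sq_nonneg (eval x (derivative (derivative p)))]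
end

section
/- Let 0 < a ≤ 1 and let z₀ ∈ [-a, 2]. Then (i) every iterate z_t = f_a^{(t)}(z₀) lies in [-a, 2]; and (ii) f_a has no period-2 point on [-a, 2], i.e., there is no z ∈ [-a, 2] with f_a(f_a(z)) = z and f_a(z) ≠ z. -/
lemma fa_mem_Icc {a z : ℝ} (ha₀ : 0 < a) (ha₁ : a ≤ 1) (hz : z ∈ Set.Icc (-a) (2 : ℝ)) :
    fa a z ∈ Set.Icc (-a) (2 : ℝ) := by
  obtain ⟨h1, h2⟩ := hz
  have e1 : fa a z + a = (z + a) * (z - 1) ^ 2 := by unfold fa; ring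
  have e2 : 2 - fa a z = (2 - z) * (z ^ 2 + a * z + 1) := by unfold fa; ring
  have p1 : 0 ≤ (z + a) * (z - 1) ^ 2 := mul_nonneg (by linarith) (sq_nonneg _)
  have p2 : 0 ≤ (2 - z) * (z ^ 2 + a * z + 1) :=
    mul_nonneg (by linarith) (by nlinarith [sq_nonneg (z + a / 2)])
  constructor <;> linarith

lemma eq_of_fa_swap {a x y : ℝ} (ha₀ : 0 < a) (ha₁ : a ≤ 1) (hx : fa a x = y)
    (hy : fa a y = x) : x = y := by
  by_contra hne
  have hd : x - y ≠ 0 := sub_ne_zero.mpr hne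
  unfold fa at hx hy
  obtain ⟨c, rfl⟩ : ∃ c, a = 2 - c := ⟨2 - a, by ring⟩
  obtain ⟨s, rfl⟩ : ∃ s, y = s - x := ⟨x + y, by ring⟩
  have hprod : x * (s - x) = s ^ 2 - c * s + 2 * (c - 1) := by
    apply mul_left_cancel₀ hd
    linear_combination hy - hx
  have hcubic : s ^ 3 - 2 * c * s ^ 2 + (c ^ 2 + 2 * c - 1) * s - 2 * c * (c - 1) = 0 := by
    linear_combination (-1 / 2) * (hx + hy) + (-1 / 2) * (3 * s - 2 * c) * hprod
  have hquad : 3 * s ^ 2 - 4 * c * s + 8 * (c - 1) < 0 := by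
    have hpos : 0 < (x - (s - x)) ^ 2 := by positivity
    nlinarith
  have hs : 0 < s := by
    by_contra! h
    nlinarith [sq_nonneg s, mul_nonneg (by linarith : 0 ≤ c) (neg_nonneg.mpr h)]
  have hfac : 0 < s ^ 2 - 5 / 4 * c * s + 2 * c - 1 := by
    nlinarith [sq_nonneg (s - 5 / 8 * c),
      mul_nonneg (by linarith : 0 ≤ c - 1) (by linarith : 0 ≤ 2 - c)]
  have hlow := mul_pos hs hfac
  -- The quadratic inequality multiplied by `c / 4` bounds the constant term `2 c (c - 1)`.
  have hconst := mul_pos (by linarith : 0 < c) (neg_pos.mpr hquad)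
  linarith [hlow, hconst, hcubic]

/-- For `0 < a ≤ 1` and `z₀ ∈ [-a, 2]`: (i) every iterate of `z₀` under `f_a`
stays in `[-a, 2]`; (ii) `f_a` has no period-2 point on `[-a, 2]`. -/
theorem cubic_invariant_no_period_two (a : ℝ) (ha₀ : 0 < a) (ha₁ : a ≤ 1)
    (z₀ : ℝ) (hz₀ : z₀ ∈ Set.Icc (-a) (2 : ℝ)) :
    (∀ t : ℕ, (fa a)^[t] z₀ ∈ Set.Icc (-a) (2 : ℝ)) ∧
    (¬ ∃ z ∈ Set.Icc (-a) (2 : ℝ), fa a (fa a z) = z ∧ fa a z ≠ z) := by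
  refine ⟨fun t => ?_, ?_⟩
  · induction t with
    | zero => exact hz₀
    | succ n ih =>
      rw [Function.iterate_succ_apply']
      exact fa_mem_Icc ha₀ ha₁ ih
  · rintro ⟨z, -, hz, hne⟩
    exact hne (eq_of_fa_swap ha₀ ha₁ rfl hz).symm
end

section
/- Let a ∈ (0, 1]. Then for every z ∈ (-a, 2), one has z^4 + (a-3)z^3 + (3-3a)z^2 + (2a-2)z + 2 > 0. -/
/-- For `a ∈ (0, 1]` and every `z ∈ (-a, 2)`,
`z⁴ + (a-3)z³ + (3-3a)z² + (2a-2)z + 2 > 0`. -/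
theorem quartic_pos (a : ℝ) (ha₀ : 0 < a) (ha₁ : a ≤ 1) :
    ∀ z ∈ Set.Ioo (-a) (2 : ℝ),
      0 < z ^ 4 + (a - 3) * z ^ 3 + (3 - 3 * a) * z ^ 2 + (2 * a - 2) * z + 2 := by
  intro z _
  -- The quartic is affine in `a`, hence a convex combination of its values at `a = 0` and `a = 1`;
  -- each of these is a sum of squares plus a positive constant, so it is positive for all real `z`.
  have h₀ : 0 < z ^ 4 - 3 * z ^ 3 + 3 * z ^ 2 - 2 * z + 2 := by
    have h : z ^ 4 - 3 * z ^ 3 + 3 * z ^ 2 - 2 * z + 2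
        = (z * (z - 3 / 2)) ^ 2 + 3 / 4 * (z - 4 / 3) ^ 2 + 2 / 3 := by ring
    rw [h]; positivity
  have h₁ : 0 < z ^ 4 - 2 * z ^ 3 + 2 := by
    have h : z ^ 4 - 2 * z ^ 3 + 2
        = (z ^ 2 - z - 3 / 4) ^ 2 + 1 / 2 * (z - 3 / 2) ^ 2 + 5 / 16 := by ring
    rw [h]; positivity
  calc 0 < (1 - a) * (z ^ 4 - 3 * z ^ 3 + 3 * z ^ 2 - 2 * z + 2)
        + a * (z ^ 4 - 2 * z ^ 3 + 2) :=
        add_pos_of_nonneg_of_pos (mul_nonneg (sub_nonneg.2 ha₁) h₀.le) (mul_pos ha₀ h₁)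
    _ = _ := by ring
end

section
/- Let 2√2 - 2 < a ≤ 1. Then for every z with (2 - a - √(a^2+4a))/2 ≤ z ≤ 1/4, the second iterate of the cubic map satisfies |f_a(f_a(z))| ≤ |z|. -/
/-- The monotonicity of `h(s) = s - z s² - z² s³` while `z s` stays in `[-1, 1/3]`. -/
lemma h_mono {z s t : ℝ} (hst : s ≤ t) (hs₁ : -1 ≤ z * s) (hs₂ : z * s ≤ 1 / 3)
    (ht₁ : -1 ≤ z * t) (ht₂ : z * t ≤ 1 / 3) :
    s - z * s ^ 2 - z ^ 2 * s ^ 3 ≤ t - z * t ^ 2 - z ^ 2 * t ^ 3 := by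
  -- the difference quotient, in terms of `p = z s` and `q = z t`
  have key : 0 ≤ 1 - (z * s + z * t)
      - ((z * s) ^ 2 + (z * s) * (z * t) + (z * t) ^ 2) := by
    generalize z * s = p at *
    generalize z * t = q at *
    nlinarith [mul_nonneg (sub_nonneg.2 hs₁) (sub_nonneg.2 hs₂),
      mul_nonneg (sub_nonneg.2 ht₁) (sub_nonneg.2 ht₂),
      mul_nonneg (sub_nonneg.2 hs₁) (sub_nonneg.2 ht₂),
      mul_nonneg (sub_nonneg.2 ht₁) (sub_nonneg.2 hs₂)]
  nlinarith [mul_nonneg (sub_nonneg.2 hst) key]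

/-- The bound `h(T) ≤ 1` at the extremal parameter `a = 1`, where `T = 1 + z - z²`. -/
lemma h_extremal_le_one {z : ℝ} (hz₂ : z ≤ 1 / 4) (hT : 0 ≤ 1 + z - z ^ 2) :
    (1 + z - z ^ 2) - z * (1 + z - z ^ 2) ^ 2 - z ^ 2 * (1 + z - z ^ 2) ^ 3 ≤ 1 := by
  have hv : 0 ≤ 1 + 2 * (1 - z) + z * (1 - z) ^ 2 := by
    have h : 0 ≤ 2 + z * (1 - z) := by linarith
    nlinarith [mul_nonneg (by linarith : (0 : ℝ) ≤ 1 - z) h]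
  have h := mul_nonneg (sq_nonneg z) (add_nonneg hv (pow_nonneg hT 3))
  linear_combination h

/-- For `z s` in `[-5/8, 1/3]` the multiplier `P` of the second iterate lies in `[0, h(s)]`. -/
lemma multiplier_bounds {a z s : ℝ} (ha₀ : 4 / 5 ≤ a) (ha₁ : a ≤ 1) (hs : 0 ≤ s)
    (hy₁ : -5 / 8 ≤ z * s) (hy₂ : z * s ≤ 1 / 3) :
    0 ≤ s * ((2 * a - 1) - (2 - a) * (z * s) - (z * s) ^ 2) ∧
      s * ((2 * a - 1) - (2 - a) * (z * s) - (z * s) ^ 2)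
        ≤ s - z * s ^ 2 - z ^ 2 * s ^ 3 := by
  constructor
  · apply mul_nonneg hs
    generalize z * s = y at *
    nlinarith [mul_nonneg (sub_nonneg.2 hy₁) (sub_nonneg.2 hy₂),
      mul_nonneg (sub_nonneg.2 ha₁) (sub_nonneg.2 hy₁),
      mul_nonneg (sub_nonneg.2 ha₀) (sub_nonneg.2 hy₁),
      mul_nonneg (sub_nonneg.2 ha₀) (sub_nonneg.2 hy₂)]
  · have h := mul_nonneg hs (mul_nonneg (sub_nonneg.2 ha₁) (by linarith : 0 ≤ 2 + z * s))
    linear_combination h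

/-- For `2√2 - 2 < a ≤ 1` and every `z` with `(2-a-√(a²+4a))/2 ≤ z ≤ 1/4`,
the second iterate satisfies `|f_a(f_a(z))| ≤ |z|`. -/
theorem cubic_second_iterate_contraction (a : ℝ)
    (ha₀ : 2 * Real.sqrt 2 - 2 < a) (ha₁ : a ≤ 1) :
    ∀ z : ℝ, (2 - a - Real.sqrt (a ^ 2 + 4 * a)) / 2 ≤ z → z ≤ 1 / 4 →
      |fa a (fa a z)| ≤ |z| := by
  intro z hz hz₂
  have ha : 4 / 5 ≤ a := by
    have : (7 / 5 : ℝ) ≤ Real.sqrt 2 := Real.le_sqrt_of_sq_le (by norm_num)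
    linarith
  have hr₀ : 0 ≤ Real.sqrt (a ^ 2 + 4 * a) := Real.sqrt_nonneg _
  have hr : Real.sqrt (a ^ 2 + 4 * a) ^ 2 = a ^ 2 + 4 * a := Real.sq_sqrt (by nlinarith)
  have hr₁ : Real.sqrt (a ^ 2 + 4 * a) ≤ 9 / 4 := Real.sqrt_le_iff.2 ⟨by norm_num, by nlinarith⟩
  generalize Real.sqrt (a ^ 2 + 4 * a) = r at *
  have hz₁ : -5 / 8 ≤ z := by linarith
  obtain ⟨s, hs⟩ : ∃ s, s = -(z ^ 2 + (a - 2) * z + 1 - 2 * a) := ⟨_, rfl⟩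
  have hs₀ : 0 ≤ s := by
    -- `4 s = r² - (2 z - 2 + a)²`, factored over the two roots of `g_a`
    have := mul_nonneg (by linarith : 0 ≤ r + (2 * z - 2 + a))
      (by linarith : 0 ≤ r - (2 * z - 2 + a))
    nlinarith
  have hsT : s ≤ 1 + z - z ^ 2 := by nlinarith
  have bound : ∀ t, 0 ≤ t → t ≤ 1 + z - z ^ 2 → -5 / 8 ≤ z * t ∧ z * t ≤ 1 / 3 := by
    intro t ht₀ ht
    rcases le_total z 0 with h | h
    · have : t ≤ 1 := by nlinarith
      constructor <;> nlinarith
    · have : t ≤ 5 / 4 := by nlinarith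
      constructor <;> nlinarith
  obtain ⟨hy₁, hy₂⟩ := bound s hs₀ hsT
  obtain ⟨hq₁, hq₂⟩ := bound _ (hs₀.trans hsT) le_rfl
  obtain ⟨hP₀, hP₁⟩ := multiplier_bounds ha ha₁ hs₀ hy₁ hy₂
  have hP : s * ((2 * a - 1) - (2 - a) * (z * s) - (z * s) ^ 2) ≤ 1 :=
    hP₁.trans ((h_mono hsT (by linarith) hy₂ (by linarith) hq₂).trans
      (h_extremal_le_one hz₂ (hs₀.trans hsT)))
  have hf : fa a z = -(z * s) := by rw [fa, hs]; ring
  have hff : fa a (fa a z) = z * (s * ((2 * a - 1) - (2 - a) * (z * s) - (z * s) ^ 2)) := by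
    rw [hf, fa]; ring
  rw [hff, abs_mul, abs_of_nonneg hP₀]
  exact mul_le_of_le_one_right (abs_nonneg z) hP
end

section
/- Let 1 < a ≤ 2 and z₀ ∈ [-a, 2]. Then (i) every iterate f_a^{(t)}(z₀) lies in [-a, 2]; and (ii) f_a has a period-2 point in the open interval (0, 1), i.e., there exists z ∈ (0, 1) with f_a(f_a(z)) = z and f_a(z) ≠ z. -/
lemma fa_mapsTo_Icc {a : ℝ} (ha₀ : 1 < a) (ha₁ : a ≤ 2) :
    Set.MapsTo (fa a) (Set.Icc (-a) 2) (Set.Icc (-a) 2) := by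
  rintro z ⟨hz₁, hz₂⟩
  have lower : fa a z + a = (z + a) * (z - 1) ^ 2 := by unfold fa; ring
  have upper : 2 - fa a z = (2 - z) * (z ^ 2 + a * z + 1) := by unfold fa; ring
  have hq : 0 ≤ z ^ 2 + a * z + 1 := by nlinarith [sq_nonneg (z + a / 2)]
  have h₁ : 0 ≤ (z + a) * (z - 1) ^ 2 := mul_nonneg (by linarith) (sq_nonneg _)
  have h₂ : 0 ≤ (2 - z) * (z ^ 2 + a * z + 1) := mul_nonneg (by linarith) hq
  exact ⟨by linarith, by linarith⟩

lemma exists_period_two {a : ℝ} (ha₀ : 1 < a) :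
    ∃ z ∈ Set.Ioo (0 : ℝ) 1, fa a (fa a z) = z ∧ fa a z ≠ z := by
  let g : ℝ → ℝ := fun z => z ^ 2 + (a - 2) * z + 1 - 2 * a
  let h : ℝ → ℝ := fun z => g z * g (fa a z)
  have hcont : Continuous h := by
    simp only [h, g, fa]
    fun_prop
  have h0 : 1 < h 0 := by
    have : h 0 = (1 - 2 * a) ^ 2 := by simp only [h, g, fa]; ring
    rw [this]; nlinarith
  have h1 : h 1 < 1 := by
    have : h 1 = -a := by simp only [h, g, fa]; ring
    rw [this]; linarith
  obtain ⟨z, hz, hhz⟩ := intermediate_value_Ioo' zero_le_one hcont.continuousOn ⟨h1, h0⟩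
  refine ⟨z, hz, ?_, fun hfix => ?_⟩
  · calc fa a (fa a z) = z * h z := by simp only [h, g, fa]; ring
      _ = z := by rw [hhz, mul_one]
  · have hdiff : z - fa a z = z * (z + a) * (2 - z) := by unfold fa; ring
    have hpos : 0 < z * (z + a) * (2 - z) :=
      mul_pos (mul_pos hz.1 (by linarith [hz.1])) (by linarith [hz.2])
    linarith

/-- For `1 < a ≤ 2` and `z₀ ∈ [-a, 2]`: (i) every iterate of `z₀` under `f_a`
stays in `[-a, 2]`; (ii) `f_a` has a period-2 point in `(0, 1)`. -/
theorem cubic_invariant_period_two_exists (a : ℝ) (ha₀ : 1 < a) (ha₁ : a ≤ 2)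
    (z₀ : ℝ) (hz₀ : z₀ ∈ Set.Icc (-a) (2 : ℝ)) :
    (∀ t : ℕ, (fa a)^[t] z₀ ∈ Set.Icc (-a) (2 : ℝ)) ∧
    (∃ z ∈ Set.Ioo (0 : ℝ) 1, fa a (fa a z) = z ∧ fa a z ≠ z) :=
  ⟨fun t => (fa_mapsTo_Icc ha₀ ha₁).iterate t hz₀, exists_period_two ha₀⟩
end

section
/- Let a ∈ (1, 2] satisfy (2a-1)(2a^2 + 7a - 4) ≥ 27 (equivalently, f_a((1-2a)/3) ≥ 1). Then there exists a point x₀ ∈ [-a, 2] such that f_a^{(3)}(x₀) ≤ x₀ < f_a(x₀) < f_a^{(2)}(x₀). -/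
/-- For `a ∈ (1, 2]` with `(2a-1)(2a²+7a-4) ≥ 27`, there exists `x₀ ∈ [-a, 2]`
with `f_a³(x₀) ≤ x₀ < f_a(x₀) < f_a²(x₀)` (the Li–Yorke period-3 condition). -/
theorem cubic_liyorke_point (a : ℝ) (ha₀ : 1 < a) (ha₁ : a ≤ 2)
    (ha₂ : 27 ≤ (2 * a - 1) * (2 * a ^ 2 + 7 * a - 4)) :
    ∃ x₀ ∈ Set.Icc (-a) (2 : ℝ),
      (fa a)^[3] x₀ ≤ x₀ ∧ x₀ < fa a x₀ ∧ fa a x₀ < (fa a)^[2] x₀ := by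
  have hcont : Continuous (fa a) := by unfold fa; fun_prop
  have hfix : fa a (-a) = -a := by unfold fa; ring
  have hone : fa a 1 = -a := by unfold fa; ring
  have hcrit : 1 ≤ fa a ((1 - 2 * a) / 3) := by
    have h : fa a ((1 - 2 * a) / 3) = (2 * a - 1) * (2 * a ^ 2 + 7 * a - 4) / 27 := by
      unfold fa; ring
    rw [h]; linarith
  obtain ⟨y, ⟨hay, hyc⟩, hy⟩ : (1 : ℝ) ∈ fa a '' Set.Icc (-a) ((1 - 2 * a) / 3) :=
    intermediate_value_Icc (by linarith) hcont.continuousOn ⟨by linarith, hcrit⟩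
  obtain ⟨x, ⟨hax, hxy⟩, hx⟩ : y ∈ fa a '' Set.Icc (-a) y :=
    intermediate_value_Icc hay hcont.continuousOn ⟨by linarith, by linarith⟩
  -- `x = y` would force `y = fa a x = fa a y = 1`, but `y < 0`.
  have hne : x ≠ y := by
    rintro rfl
    linarith
  refine ⟨x, ⟨hax, by linarith⟩, ?_, ?_, ?_⟩
  · simpa [hx, hy, hone] using hax
  · rw [hx]; exact lt_of_le_of_ne hxy hne
  · simp only [Function.iterate_succ, Function.iterate_zero, Function.comp_apply, id, hx, hy]
    linarith
end

section
/- Consider the generalized phase retrieval model with a single data point: let X ∈ ℝ^d, y, c, η ∈ ℝ, γ ∈ ℝ with γ ≠ 0, define g(w) = (γ/2)(X·w)^2 + c (X·w) for w ∈ ℝ^d, and let w^{(t)} ∈ ℝ^d be any sequence satisfying the gradient descent recursion w^{(t+1)} = w^{(t)} - η (g(w^{(t)}) - y)(c + γ X·w^{(t)}) X. Define e^{(t)} = g(w^{(t)}) - y, z_t = η γ ‖X‖^2 e^{(t)}, and a = (γ y + c^2/2) η ‖X‖^2. Then z_{t+1} = f_a(z_t) for every t ≥ 0. -/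
/-!
The update moves `w` along `X`, so only the scalar `s = X·w` matters. Completing the square gives
`(c + γ s)² = c² + 2γ (e + y)`, hence `η ‖X‖² (c + γ s)² = 2 (a + z)`. Expanding the quadratic `g`
along the step yields `z' = z (1 - 2 (a + z) + z (a + z))`, which is `f_a(z)`.
-/

open scoped RealInnerProductSpace

/-- Gradient descent on the single-data-point generalized phase retrieval loss:
with `g(w) = (γ/2)(X·w)² + c(X·w)`, the update
`w^{(t+1)} = w^{(t)} - η (g(w^{(t)}) - y)(c + γ X·w^{(t)}) X`, the rescaled error
`z_t = ηγ‖X‖² (g(w^{(t)}) - y)` obeys the cubic-map recursion `z_{t+1} = f_a(z_t)`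
with `a = (γy + c²/2) η ‖X‖²`. -/
theorem phase_retrieval_single_cubic_dynamics
    (d : ℕ) (X : EuclideanSpace ℝ (Fin d)) (y c η γ : ℝ) (hγ : γ ≠ 0)
    (g : EuclideanSpace ℝ (Fin d) → ℝ)
    (hg : ∀ w, g w = γ / 2 * ⟪X, w⟫ ^ 2 + c * ⟪X, w⟫)
    (w : ℕ → EuclideanSpace ℝ (Fin d))
    (hw : ∀ t, w (t + 1) = w t - (η * (g (w t) - y) * (c + γ * ⟪X, w t⟫)) • X)
    (e z : ℕ → ℝ) (a : ℝ)
    (he : ∀ t, e t = g (w t) - y)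
    (hz : ∀ t, z t = η * γ * ‖X‖ ^ 2 * e t)
    (ha : a = (γ * y + c ^ 2 / 2) * η * ‖X‖ ^ 2) :
    ∀ t : ℕ, z (t + 1) = fa a (z t) := by
  intro t
  -- `s = X·w` evolves autonomously: `s' = s - η e (c + γ s) ‖X‖²`.
  have hs : ⟪X, w (t + 1)⟫
      = ⟪X, w t⟫ - η * (g (w t) - y) * (c + γ * ⟪X, w t⟫) * ‖X‖ ^ 2 := by
    rw [hw, inner_sub_right, real_inner_smul_right, real_inner_self_eq_norm_sq]
  rw [hz, hz, he, he, hg (w (t + 1)), hs, hg (w t), ha, fa]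
  ring
end

section
/- Consider gradient descent for generalized phase retrieval on n mutually orthogonal data points: let X_1, …, X_n ∈ ℝ^d be pairwise orthogonal, let y_i, c_i ∈ ℝ, η ∈ ℝ, γ ∈ ℝ with γ ≠ 0, define g_i(w) = (γ/2)(X_i·w)^2 + c_i (X_i·w), α_i^{(t)} = c_i + γ X_i·w^{(t)}, e_i^{(t)} = g_i(w^{(t)}) - y_i, and let w^{(t)} ∈ ℝ^d satisfy w^{(t+1)} = w^{(t)} - (η/n) Σ_{i=1}^n e_i^{(t)} α_i^{(t)} X_i. Define κ_i = η γ ‖X_i‖^2 / n, z_i^{(t)} = κ_i e_i^{(t)}, and a_i = (y_i + c_i^2/(2γ)) κ_i. Then for every i ∈ {1, …, n} and every t ≥ 0, z_i^{(t+1)} = f_{a_i}(z_i^{(t)}). -/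
/-!
By orthogonality, the inner product `u = ⟪X i, w⟫` evolves by the scalar recursion
`u ↦ u - s e α`, where `s = η ‖X i‖ ^ 2 / n` and `κ = γ s`. Expanding the quadratic `g i` exactly
gives `e ↦ e (1 - s α ^ 2 + (γ / 2) s ^ 2 e α ^ 2)`. Completing the square,
`α ^ 2 = 2 γ (e + y + c ^ 2 / (2 γ))`, that is, `s α ^ 2 = 2 (z + a)`. The factor is therefore
`1 - 2 (z + a) + z (z + a) = (z + a) (z - 2) + 1`.
-/

open scoped RealInnerProductSpace BigOperators

/-- Gradient descent on generalized phase retrieval with `n` mutually orthogonal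
data points: with `g_i(w) = (γ/2)(X_i·w)² + c_i(X_i·w)`,
`α_i^{(t)} = c_i + γ X_i·w^{(t)}`, `e_i^{(t)} = g_i(w^{(t)}) - y_i`, and the update
`w^{(t+1)} = w^{(t)} - (η/n) Σ_i e_i^{(t)} α_i^{(t)} X_i`, each rescaled error
`z_i^{(t)} = κ_i e_i^{(t)}` with `κ_i = ηγ‖X_i‖²/n` obeys `z_i^{(t+1)} = f_{a_i}(z_i^{(t)})`,
where `a_i = (y_i + c_i²/(2γ)) κ_i`. -/
theorem phase_retrieval_orthogonal_cubic_dynamics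
    (d n : ℕ) (hn : 0 < n)
    (X : Fin n → EuclideanSpace ℝ (Fin d))
    (horth : ∀ i j, i ≠ j → ⟪X i, X j⟫ = 0)
    (y c : Fin n → ℝ) (η γ : ℝ) (hγ : γ ≠ 0)
    (g : Fin n → EuclideanSpace ℝ (Fin d) → ℝ)
    (hg : ∀ i w, g i w = γ / 2 * ⟪X i, w⟫ ^ 2 + c i * ⟪X i, w⟫)
    (α e : Fin n → ℕ → ℝ)
    (w : ℕ → EuclideanSpace ℝ (Fin d))
    (hα : ∀ i t, α i t = c i + γ * ⟪X i, w t⟫)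
    (he : ∀ i t, e i t = g i (w t) - y i)
    (hw : ∀ t, w (t + 1) = w t - (η / n) • ∑ i, (e i t * α i t) • X i)
    (κ a : Fin n → ℝ) (z : Fin n → ℕ → ℝ)
    (hκ : ∀ i, κ i = η * γ * ‖X i‖ ^ 2 / n)
    (hz : ∀ i t, z i t = κ i * e i t)
    (ha : ∀ i, a i = (y i + (c i) ^ 2 / (2 * γ)) * κ i) :
    ∀ (i : Fin n) (t : ℕ), z i (t + 1) = fa (a i) (z i t) := by
  intro i t
  -- Orthogonality leaves only the `i`-th summand.
  have hu : ⟪X i, w (t + 1)⟫ = ⟪X i, w t⟫ - (η / n) * (e i t * α i t * ‖X i‖ ^ 2) := by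
    rw [hw, inner_sub_right, inner_smul_right, inner_sum, Finset.sum_eq_single i]
    · rw [inner_smul_right, real_inner_self_eq_norm_sq]
    · intro j _ hj
      rw [inner_smul_right, horth i j hj.symm, mul_zero]
    · simp
  have hn' : (n : ℝ) ≠ 0 := by exact_mod_cast hn.ne'
  rw [hz, hz, he, hg, hu, ha, hκ, he, hα, hg, fa]
  field_simp
  ring
end

section
/- Consider gradient descent for training the hidden layer of a two-layer neural network with quadratic activation on n mutually orthogonal data points: let d, m, n be positive integers, X_1, …, X_n ∈ ℝ^d pairwise orthogonal, y_i ∈ ℝ, η ∈ ℝ, and let hidden-layer weights u_1^{(t)}, …, u_m^{(t)} ∈ ℝ^d satisfy, with e_i^{(t)} = (1/(√m · d)) Σ_{j=1}^m (X_i·u_j^{(t)})^2 - y_i, the update u_j^{(t+1)} = u_j^{(t)} - (2η/(√m · d · n)) Σ_{i=1}^n e_i^{(t)} (X_i·u_j^{(t)}) X_i for every j. Define z_i^{(t)} = 2η ‖X_i‖^2 e_i^{(t)} / (√m · d · n) and a_i = 2η ‖X_i‖^2 y_i / (√m · d · n). Then for every i ∈ {1, …, n} and every t ≥ 0, z_i^{(t+1)}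 = f_{a_i}(z_i^{(t)}). -/
/-!
By orthogonality, pairing the gradient step with `X i` kills every summand except the `i`-th, so
`⟪X i, u j⟫` is multiplied by `1 - z i`, the same factor for every neuron `j`. The network output
`e i + y i` on `X i` is quadratic in these inner products, hence is multiplied by `(1 - z i) ^ 2`.
After rescaling this reads `z' + a = (1 - z) ^ 2 * (z + a)`, and
`(1 - z) ^ 2 * (z + a) - a = fa a z` is a polynomial identity.
-/

open scoped RealInnerProductSpace BigOperators

/-- Gradient descent on the hidden layer of a two-layer network with quadratic
activation and `n` mutually orthogonal data points: with
`e_i^{(t)} = (1/(√m·d)) Σ_j (X_i·u_j^{(t)})² - y_i` and update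
`u_j^{(t+1)} = u_j^{(t)} - (2η/(√m·d·n)) Σ_i e_i^{(t)} (X_i·u_j^{(t)}) X_i`,
each rescaled error `z_i^{(t)} = 2η‖X_i‖² e_i^{(t)}/(√m·d·n)` obeys the cubic-map
recursion `z_i^{(t+1)} = f_{a_i}(z_i^{(t)})` with `a_i = 2η‖X_i‖² y_i/(√m·d·n)`. -/
theorem quadratic_network_orthogonal_cubic_dynamics
    (d m n : ℕ) (hd : 0 < d) (hm : 0 < m) (hn : 0 < n)
    (X : Fin n → EuclideanSpace ℝ (Fin d))
    (horth : ∀ i j, i ≠ j → ⟪X i, X j⟫ = 0)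
    (y : Fin n → ℝ) (η : ℝ)
    (u : ℕ → Fin m → EuclideanSpace ℝ (Fin d))
    (e : Fin n → ℕ → ℝ)
    (he : ∀ i t, e i t = (1 / (Real.sqrt m * d)) * ∑ j, ⟪X i, u t j⟫ ^ 2 - y i)
    (hu : ∀ t j, u (t + 1) j =
      u t j - (2 * η / (Real.sqrt m * d * n)) • ∑ i, (e i t * ⟪X i, u t j⟫) • X i)
    (z : Fin n → ℕ → ℝ) (a : Fin n → ℝ)
    (hz : ∀ i t, z i t = 2 * η * ‖X i‖ ^ 2 * e i t / (Real.sqrt m * d * n))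
    (ha : ∀ i, a i = 2 * η * ‖X i‖ ^ 2 * y i / (Real.sqrt m * d * n)) :
    ∀ (i : Fin n) (t : ℕ), z i (t + 1) = fa (a i) (z i t) := by
  intro i t
  have inner_step : ∀ j, ⟪X i, u (t + 1) j⟫ = (1 - z i t) * ⟪X i, u t j⟫ := by
    intro j
    have hsum : ⟪X i, ∑ k, (e k t * ⟪X k, u t j⟫) • X k⟫
        = e i t * ⟪X i, u t j⟫ * ‖X i‖ ^ 2 := by
      rw [inner_sum, Finset.sum_eq_single i]
      · rw [real_inner_smul_right, real_inner_self_eq_norm_sq]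
      · intro k _ hk
        rw [real_inner_smul_right, horth i k hk.symm, mul_zero]
      · simp
    rw [hu, inner_sub_right, real_inner_smul_right, hsum, hz]
    ring
  have error_step : e i (t + 1) = (1 - z i t) ^ 2 * (e i t + y i) - y i := by
    rw [he i (t + 1), he i t]
    simp only [inner_step, mul_pow, ← Finset.mul_sum]
    ring
  -- Both `z` and `a` carry the factor `2η‖X i‖² / (√m·d·n)`, so this is the rescaled `error_step`.
  have rescaled_step : z i (t + 1) = (1 - z i t) ^ 2 * (z i t + a i) - a i := by
    rw [hz i (t + 1), error_step, ha i]
    -- The squared factor must keep its `z i t`; only the linear occurrence is expanded.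
    generalize hw : (1 - z i t) ^ 2 = w
    rw [hz i t]
    ring
  rw [rescaled_step, fa]
  ring
end
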